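/- There is an absolute constant C such that for every entire function f of exponential type at most π that is real-valued on ℝ and whose restriction to ℝ is Lebesgue integrable, there exists an entire function g of exponential type at most π with g integrable on ℝ, |f(t)| ≤ g(t) for all t ∈ ℝ, and ‖g‖_{L¹(ℝ)} ≤ C‖f‖_{L¹(ℝ)}. (One may take g(t) = ∑_{n∈ℤ} c_n sin²((π/2)(t−n))/(t−n)² with c_n = max_{[n,n+1]} |f|.) -/

import Mathlib

open MeasureTheory Complex

noncomputable section

/-- `f` is an entire function of exponential type at most `a`:
for every `ε > 0` there is `B` with `‖f(z)‖ ≤ B e^{(a+ε)‖z‖}` for all `z`. -/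
def ExpTypeLE (a : ℝ) (f : ℂ → ℂ) : Prop :=
  ∀ ε : ℝ, 0 < ε → ∃ B : ℝ, ∀ z : ℂ, ‖f z‖ ≤ B * Real.exp ((a + ε) * ‖z‖)

lemma aux_param (w : ℝ → ℂ) (hw : Integrable w) (k : ℂ → ℂ) (hk : Differentiable ℂ k)
    (a : ℝ → ℂ) (ha : Continuous a)
    (hb : ∀ R : ℝ, ∃ B : ℝ, ∀ (z : ℂ) (s : ℝ), ‖z‖ ≤ R → w s ≠ 0 → ‖k (z + a s)‖ ≤ B) (z : ℂ) :
    HasDerivAt (fun z => ∫ s, w s * k (z + a s)) (∫ s, w s * deriv k (z + a s)) z := by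
  obtain ⟨B, hB⟩ := hb (‖z‖ + 2)
  have hkc : Continuous k := hk.continuous
  have hdk : Continuous (deriv k) := (hk.contDiff (n := 1)).continuous_deriv le_rfl
  have hmeas : ∀ x : ℂ, AEStronglyMeasurable (fun s => w s * k (x + a s)) volume := fun x =>
    hw.aestronglyMeasurable.mul (by fun_prop : Continuous fun s => k (x + a s)).aestronglyMeasurable
  have hle : ∀ x ∈ Metric.ball z 1, ‖x‖ ≤ ‖z‖ + 1 := by
    intro x hx
    have h1 : ‖x - z‖ < 1 := by simpa [dist_eq_norm] using hx
    have := norm_add_le (x - z) z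
    simp only [sub_add_cancel] at this
    linarith
  refine (hasDerivAt_integral_of_dominated_loc_of_deriv_le (Metric.ball_mem_nhds z one_pos)
    (F := fun z s => w s * k (z + a s)) (F' := fun z s => w s * deriv k (z + a s))
    (bound := fun s => ‖w s‖ * B) ?_ ?_ ?_ ?_ ?_ ?_).2
  · exact Filter.Eventually.of_forall hmeas
  · refine (hw.norm.mul_const B).mono' (hmeas z) (Filter.Eventually.of_forall fun s => ?_)
    rw [norm_mul]
    by_cases h : w s = 0
    · simp [h]
    · exact mul_le_mul_of_nonneg_left (hB z s (by linarith) h) (norm_nonneg _)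
  · exact hw.aestronglyMeasurable.mul
      (by fun_prop : Continuous fun s => deriv k (z + a s)).aestronglyMeasurable
  · refine Filter.Eventually.of_forall fun s x hx => ?_
    rw [norm_mul]
    by_cases h : w s = 0
    · simp [h]
    · refine mul_le_mul_of_nonneg_left ?_ (norm_nonneg _)
      have := Complex.norm_deriv_le_of_forall_mem_sphere_norm_le (c := x + a s) (R := 1) (C := B)
        one_pos (f := k) hk.diffContOnCl ?_
      · simpa using this
      · intro y hy
        have h1 : ‖y - (x + a s)‖ = 1 := by simpa [dist_eq_norm] using hy
        have := hB (y - a s) s ?_ h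
        · simpa using this
        · have h2 := norm_add_le (y - (x + a s)) x
          have h3 : y - (x + a s) + x = y - a s := by ring
          rw [h3] at h2
          linarith [hle x hx]
  · exact hw.norm.mul_const B
  · refine Filter.Eventually.of_forall fun s x hx => ?_
    have h1 := (hk (x + a s)).hasDerivAt.comp_add_const x (a s)
    exact h1.const_mul (w s)

lemma aux_PL_half (F : ℂ → ℂ) (hF : Differentiable ℂ F) (ht : ExpTypeLE Real.pi F) (A : ℝ)
    (hA : ∀ x : ℝ, ‖F x‖ ≤ A) (c : ℂ) (hc : c = I ∨ c = -I) (z : ℂ) (hz : 0 ≤ z.re) :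
    ‖F (c * z)‖ ≤ A * Real.exp ((Real.pi + 1) * z.re) := by
  obtain ⟨B, hB⟩ := ht 1 one_pos
  have hcn : ‖c‖ = 1 := by rcases hc with rfl | rfl <;> simp
  have hB0 : 0 ≤ B := by
    have := (norm_nonneg _).trans (hB 0)
    simpa using this
  set G : ℂ → ℂ := fun z => F (c * z) * exp (-((Real.pi + 1 : ℝ) : ℂ) * z) with hG
  have hGd : Differentiable ℂ G := by
    have : Differentiable ℂ fun z => F (c * z) := hF.comp (by fun_prop)
    exact this.mul (by fun_prop)
  have hexpn : ∀ z : ℂ, ‖exp (-((Real.pi + 1 : ℝ) : ℂ) * z)‖ = Real.exp (-((Real.pi + 1) * z.re)) := by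
    intro z
    rw [Complex.norm_exp, neg_mul, Complex.neg_re, Complex.re_ofReal_mul]
  have hpi := Real.pi_pos
  have key : ‖G z‖ ≤ A := by
    refine PhragmenLindelof.right_half_plane_of_bounded_on_real hGd.diffContOnCl ?_ ?_ ?_ hz
    · refine ⟨1, by norm_num, (Real.pi + 1), ?_⟩
      refine Asymptotics.IsBigO.of_bound B ?_
      rw [Filter.eventually_inf_principal]
      refine Filter.Eventually.of_forall fun y hy => ?_
      have hy' : 0 < y.re := hy
      rw [hG, norm_mul, hexpn, Real.rpow_one, Real.norm_eq_abs, abs_of_pos (Real.exp_pos _)]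
      have h1 := hB (c * y)
      rw [norm_mul, hcn, one_mul] at h1
      have h2 : Real.exp (-((Real.pi + 1) * y.re)) ≤ 1 := by
        rw [Real.exp_le_one_iff]; nlinarith
      calc _ ≤ ‖F (c * y)‖ * 1 := mul_le_mul_of_nonneg_left h2 (norm_nonneg _)
        _ ≤ _ := by rw [mul_one]; exact h1
    · refine ⟨B, ?_⟩
      rw [Filter.eventually_map]
      filter_upwards [Filter.eventually_ge_atTop 0] with x hx
      rw [hG, norm_mul, hexpn, Complex.ofReal_re]
      have h1 := hB (c * x)
      rw [norm_mul, hcn, one_mul, Complex.norm_real, Real.norm_eq_abs, abs_of_nonneg hx] at h1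
      calc _ ≤ B * Real.exp ((Real.pi + 1) * x) * Real.exp (-((Real.pi + 1) * x)) :=
            mul_le_mul_of_nonneg_right h1 (Real.exp_pos _).le
        _ = B := by rw [mul_assoc, ← Real.exp_add]; simp
        _ ≤ B := le_rfl
    · intro x
      rw [hG, norm_mul, hexpn]
      have : (x * I : ℂ).re = 0 := by simp
      rw [this]
      rcases hc with rfl | rfl
      · have h2 : I * (x * I) = ((-x : ℝ) : ℂ) := by
          push_cast; linear_combination (x : ℂ) * I_mul_I
        simpa [h2] using hA (-x)
      · have h2 : -I * (x * I) = ((x : ℝ) : ℂ) := by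
          linear_combination -(x : ℂ) * I_mul_I
        simpa [h2] using hA x
  rw [hG, norm_mul, hexpn] at key
  calc ‖F (c * z)‖ = ‖F (c * z)‖ * Real.exp (-((Real.pi + 1) * z.re)) * Real.exp ((Real.pi + 1) * z.re) := by
        rw [mul_assoc, ← Real.exp_add]; simp
    _ ≤ _ := mul_le_mul_of_nonneg_right key (Real.exp_pos _).le

lemma aux_PL_deriv (F : ℂ → ℂ) (hF : Differentiable ℂ F) (ht : ExpTypeLE Real.pi F) (A : ℝ)
    (hA : ∀ x : ℝ, ‖F x‖ ≤ A) : ‖deriv F 0‖ ≤ A * Real.exp (Real.pi + 1) := by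
  have hA0 : 0 ≤ A := (norm_nonneg _).trans (hA 0)
  have hpi := Real.pi_pos
  have := Complex.norm_deriv_le_of_forall_mem_sphere_norm_le (c := 0) (R := 1)
    (C := A * Real.exp (Real.pi + 1)) one_pos (f := F) hF.diffContOnCl ?_
  · simpa using this
  intro z hz
  have hz1 : ‖z‖ = 1 := by simpa using hz
  have him : |z.im| ≤ 1 := hz1 ▸ Complex.abs_im_le_norm z
  rw [abs_le] at him
  rcases le_total 0 z.im with h | h
  · have h1 := aux_PL_half F hF ht A hA I (Or.inl rfl) (-I * z) (by simpa using h)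
    have h2 : I * (-I * z) = z := by linear_combination -z * I_mul_I
    rw [h2] at h1
    refine h1.trans (mul_le_mul_of_nonneg_left (Real.exp_le_exp.2 ?_) hA0)
    have : (-I * z).re = z.im := by simp
    rw [this]; nlinarith
  · have h1 := aux_PL_half F hF ht A hA (-I) (Or.inr rfl) (I * z) (by simpa using h)
    have h2 : -I * (I * z) = z := by linear_combination -z * I_mul_I
    rw [h2] at h1
    refine h1.trans (mul_le_mul_of_nonneg_left (Real.exp_le_exp.2 ?_) hA0)
    have : (I * z).re = -z.im := by simp
    rw [this]; nlinarith

lemma aux_deriv_trunc (f : ℂ → ℂ) (hf : Differentiable ℂ f) (ht : ExpTypeLE Real.pi f)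
    (hi : Integrable (fun x : ℝ => f x)) (N : ℝ) (hN : 0 ≤ N) :
    ∫ s in Set.Ioc (-N) N, ‖deriv f (s : ℝ)‖ ≤ Real.exp (Real.pi + 1) * ∫ x : ℝ, ‖f x‖ := by
  have hdf : Continuous (deriv f) := (hf.contDiff (n := 1)).continuous_deriv le_rfl
  have hfc := hf.continuous
  have hpi := Real.pi_pos
  set φ : ℝ → ℂ := fun s => (starRingEnd ℂ) (deriv f s) * ((‖deriv f s‖⁻¹ : ℝ) : ℂ) with hφ
  have hφm : Measurable φ := by
    have h1 : Continuous fun s : ℝ => deriv f s := by fun_prop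
    have h2 : Continuous fun s : ℝ => (starRingEnd ℂ) (deriv f s) := Complex.continuous_conj.comp h1
    exact h2.measurable.mul (Complex.measurable_ofReal.comp h1.norm.measurable.inv)
  have hφ1 : ∀ s, ‖φ s‖ ≤ 1 := by
    intro s
    rw [hφ, norm_mul, Complex.norm_conj, Complex.norm_real, norm_inv, norm_norm]
    exact mul_inv_le_one
  have hφd : ∀ s : ℝ, φ s * deriv f s = (‖deriv f s‖ : ℝ) := by
    intro s
    by_cases h : deriv f s = 0
    · simp [h]
    · have hn : (‖deriv f s‖ : ℂ) ≠ 0 := by simpa using h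
      simp only [hφ]
      have := Complex.conj_mul' (deriv f s)
      push_cast
      field_simp
      rw [this]
  set S := Set.Ioc (-N) N
  set w : ℝ → ℂ := S.indicator φ with hw
  have hwi : Integrable w := by
    rw [hw, integrable_indicator_iff measurableSet_Ioc]
    exact Measure.integrableOn_of_bounded (M := 1) (by simp) hφm.aestronglyMeasurable
      (Filter.Eventually.of_forall hφ1)
  have hw1 : ∀ s, ‖w s‖ ≤ 1 := fun s => (norm_indicator_le_norm_self _ _).trans (hφ1 s)
  have hwS : ∀ s, w s ≠ 0 → ‖(s : ℂ)‖ ≤ N := by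
    intro s hs
    have : s ∈ S := Set.mem_of_indicator_ne_zero hs
    rw [Complex.norm_real, Real.norm_eq_abs, abs_le]
    exact ⟨this.1.le, this.2⟩
  have hgrow : ∀ ε : ℝ, 0 < ε → ∃ B : ℝ, 0 ≤ B ∧ ∀ (z : ℂ) (s : ℝ), w s ≠ 0 →
      ‖f (z + s)‖ ≤ B * Real.exp ((Real.pi + ε) * ‖z‖) := by
    intro ε hε
    obtain ⟨B, hB⟩ := ht ε hε
    have hB0 : 0 ≤ B := by simpa using (norm_nonneg _).trans (hB 0)
    refine ⟨B * Real.exp ((Real.pi + ε) * N), by positivity, fun z s hs => (hB _).trans ?_⟩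
    rw [mul_assoc, ← Real.exp_add]
    refine mul_le_mul_of_nonneg_left (Real.exp_le_exp.2 ?_) hB0
    have := norm_add_le z s
    have := hwS s hs
    rw [← mul_add]
    exact mul_le_mul_of_nonneg_left (by linarith) (by linarith)
  have hder := aux_param w hwi f hf (fun s => (s : ℂ)) Complex.continuous_ofReal (by
    intro R
    obtain ⟨B, hB0, hB⟩ := hgrow 1 one_pos
    refine ⟨B * Real.exp ((Real.pi + 1) * R), fun z s hz hs => (hB z s hs).trans ?_⟩
    gcongr)
  set F : ℂ → ℂ := fun z => ∫ s, w s * f (z + (s : ℝ)) with hF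
  have h1 := aux_PL_deriv F (fun z => (hder z).differentiableAt) ?_ (∫ x : ℝ, ‖f x‖) ?_
  · rw [(hder 0).deriv] at h1
    have h2 : ∫ s, w s * deriv f (0 + (s : ℝ)) = ((∫ s in S, ‖deriv f (s : ℝ)‖ : ℝ) : ℂ) := by
      rw [← integral_complex_ofReal, ← integral_indicator measurableSet_Ioc]
      congr 1
      ext s
      change _ = S.indicator _ s
      by_cases hs : s ∈ S
      · simp only [hw, Set.indicator_of_mem hs, zero_add]
        exact hφd s
      · simp [hw, Set.indicator_of_notMem hs]
    rw [h2, Complex.norm_real, Real.norm_eq_abs] at h1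
    rw [mul_comm]
    exact (le_abs_self _).trans h1
  · intro ε hε
    obtain ⟨B, hB0, hB⟩ := hgrow ε hε
    refine ⟨(∫ s, ‖w s‖) * B, fun z => ?_⟩
    rw [mul_assoc, ← integral_mul_const]
    refine norm_integral_le_of_norm_le (hwi.norm.mul_const _) (Filter.Eventually.of_forall fun s => ?_)
    rw [norm_mul]
    by_cases h : w s = 0
    · simp [h]
    · exact mul_le_mul_of_nonneg_left (hB z s h) (norm_nonneg _)
  · intro x
    have hi' : Integrable (fun s : ℝ => ‖f ((x : ℂ) + s)‖) := by
      have := (hi.comp_add_left x).norm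
      simpa using this
    have : ∫ s : ℝ, ‖f ((x : ℂ) + s)‖ = ∫ s : ℝ, ‖f s‖ := by
      have := integral_add_left_eq_self (μ := volume) (fun s : ℝ => ‖f s‖) x
      simpa using this
    rw [← this]
    refine norm_integral_le_of_norm_le hi' (Filter.Eventually.of_forall fun s => ?_)
    rw [norm_mul]
    exact mul_le_of_le_one_left (norm_nonneg _) (hw1 s)

lemma aux_deriv (f : ℂ → ℂ) (hf : Differentiable ℂ f) (ht : ExpTypeLE Real.pi f)
    (hi : Integrable (fun x : ℝ => f x)) :
    Integrable (fun s : ℝ => deriv f s) ∧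
    ∫ s : ℝ, ‖deriv f (s : ℝ)‖ ≤ Real.exp (Real.pi + 1) * ∫ x : ℝ, ‖f x‖ := by
  have hdf : Continuous (deriv f) := (hf.contDiff (n := 1)).continuous_deriv le_rfl
  have hc : Continuous fun s : ℝ => deriv f s := by fun_prop
  have hb : ∀ᶠ N : ℝ in Filter.atTop, ∫ s in (-N)..N, ‖deriv f (s : ℝ)‖ ≤
      Real.exp (Real.pi + 1) * ∫ x : ℝ, ‖f x‖ := by
    filter_upwards [Filter.eventually_ge_atTop 0] with N hN
    rw [intervalIntegral.integral_of_le (by linarith)]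
    exact aux_deriv_trunc f hf ht hi N hN
  have h1 : Integrable (fun s : ℝ => deriv f s) :=
    integrable_of_intervalIntegral_norm_bounded _ (fun i => hc.integrableOn_Ioc)
      Filter.tendsto_neg_atTop_atBot Filter.tendsto_id hb
  exact ⟨h1, le_of_tendsto (intervalIntegral_tendsto_integral h1.norm
    Filter.tendsto_neg_atTop_atBot Filter.tendsto_id) hb⟩

lemma aux_sobolev (f : ℂ → ℂ) (hf : Differentiable ℂ f) (t : ℝ) :
    ‖f t‖ ≤ ∫ s in t..(t + 1), (‖f (s : ℝ)‖ + ‖deriv f (s : ℝ)‖) := by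
  have hdf : Continuous (deriv f) := (hf.contDiff (n := 1)).continuous_deriv le_rfl
  have hfc := hf.continuous
  have hc : Continuous fun s : ℝ => deriv f s := by fun_prop
  have hc0 : Continuous fun s : ℝ => ‖f s‖ := by fun_prop
  set D := ∫ s in t..(t + 1), ‖deriv f (s : ℝ)‖ with hD
  have h : ∀ s ∈ Set.Icc t (t + 1), ‖f t‖ ≤ ‖f s‖ + D := by
    intro s hs
    have h1 : ∫ u in t..s, deriv f (u : ℝ) = f s - f t :=
      intervalIntegral.integral_eq_sub_of_hasDerivAt
        (fun u _ => (hf (u : ℂ)).hasDerivAt.comp_ofReal) (hc.intervalIntegrable _ _)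
    have h2 : ‖f s - f t‖ ≤ ∫ u in t..s, ‖deriv f (u : ℝ)‖ := by
      rw [← h1]; exact intervalIntegral.norm_integral_le_integral_norm hs.1
    have h3 : ∫ u in t..s, ‖deriv f (u : ℝ)‖ ≤ D :=
      intervalIntegral.integral_mono_interval le_rfl hs.1 hs.2
        (Filter.Eventually.of_forall fun _ => norm_nonneg _) (hc.norm.intervalIntegrable _ _)
    have h4 := norm_sub_norm_le (f t) (f s)
    rw [norm_sub_rev] at h4
    linarith
  have h5 := intervalIntegral.integral_mono_on (μ := volume) (a := t) (b := t + 1)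
    (f := fun _ => ‖f t‖) (g := fun s : ℝ => ‖f s‖ + D) (by linarith)
    (by simp) ((hc0.add continuous_const).intervalIntegrable _ _) h
  rw [intervalIntegral.integral_add (hc0.intervalIntegrable _ _) (by simp)] at h5
  rw [intervalIntegral.integral_add (hc0.intervalIntegrable _ _) (hc.norm.intervalIntegrable _ _)]
  simpa using h5

/-- The Fejér-type kernel `(sin (π z / 2) / (π z / 2))²`, as an entire function. -/
def auxM (z : ℂ) : ℂ := (dslope Complex.sin 0 ((Real.pi / 2 : ℝ) * z)) ^ 2

/-- The same kernel on the real line. -/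
def auxm (x : ℝ) : ℝ := (Real.sinc (Real.pi / 2 * x)) ^ 2

lemma auxS_diff : Differentiable ℂ (dslope Complex.sin 0) := by
  rw [← differentiableOn_univ, Complex.differentiableOn_dslope Filter.univ_mem]
  exact Complex.differentiable_sin.differentiableOn

lemma auxM_diff : Differentiable ℂ auxM := by
  have : Differentiable ℂ fun z : ℂ => dslope Complex.sin 0 ((Real.pi / 2 : ℝ) * z) :=
    auxS_diff.comp (by fun_prop)
  exact this.pow 2

lemma auxM_real (x : ℝ) : auxM x = (auxm x : ℝ) := by
  have : ∀ y : ℝ, dslope Complex.sin 0 (y : ℂ) = (Real.sinc y : ℝ) := by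
    intro y
    by_cases hy : y = 0
    · subst hy; simp [dslope_same]
    · rw [dslope_of_ne _ (by simpa using hy), Real.sinc_of_ne_zero hy, slope_def_field]
      simp
  rw [auxM, auxm, ← Complex.ofReal_mul, this]
  push_cast; rfl

lemma aux_norm_sin (z : ℂ) : ‖Complex.sin z‖ ≤ Real.exp |z.im| := by
  have h1 : ‖exp (-z * I)‖ ≤ Real.exp |z.im| := by
    rw [Complex.norm_exp]; simpa using le_abs_self z.im
  have h2 : ‖exp (z * I)‖ ≤ Real.exp |z.im| := by
    rw [Complex.norm_exp]; simpa using neg_le_abs z.im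
  rw [Complex.sin, norm_div, norm_mul, Complex.norm_I, mul_one]
  have := norm_sub_le (exp (-z * I)) (exp (z * I))
  have h3 : ‖(2 : ℂ)‖ = 2 := by simp
  rw [h3]
  linarith

lemma auxM_bound : ∃ B : ℝ, 0 ≤ B ∧ ∀ z : ℂ, ‖auxM z‖ ≤ B * Real.exp (Real.pi * |z.im|) := by
  obtain ⟨B, hB⟩ := (isCompact_closedBall (0 : ℂ) 1).exists_bound_of_continuousOn
    auxS_diff.continuous.continuousOn
  have key : ∀ z : ℂ, ‖dslope Complex.sin 0 z‖ ≤ (|B| + 1) * Real.exp |z.im| := by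
    intro z
    have he : 1 ≤ Real.exp |z.im| := Real.one_le_exp (abs_nonneg _)
    have hB0 := abs_nonneg B
    by_cases hz : ‖z‖ ≤ 1
    · have h1 := hB z (by simpa using hz)
      have := le_abs_self B
      nlinarith
    · push Not at hz
      have hz0 : z ≠ 0 := by rintro rfl; simp at hz; linarith
      rw [dslope_of_ne _ hz0, slope_def_field, norm_div]
      simp only [Complex.sin_zero, sub_zero]
      have h1 := aux_norm_sin z
      have h2 : ‖Complex.sin z‖ / ‖z‖ ≤ ‖Complex.sin z‖ := div_le_self (norm_nonneg _) hz.le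
      nlinarith
  refine ⟨(|B| + 1) ^ 2, by positivity, fun z => ?_⟩
  rw [auxM, norm_pow]
  have h1 := key ((Real.pi / 2 : ℝ) * z)
  have h2 : Real.exp (Real.pi * |z.im|) = (Real.exp |(((Real.pi / 2 : ℝ) : ℂ) * z).im|) ^ 2 := by
    rw [← Real.exp_nat_mul, Complex.im_ofReal_mul, abs_mul,
      abs_of_pos (by positivity : (0 : ℝ) < Real.pi / 2)]
    congr 1; push_cast; ring
  rw [h2, ← mul_pow]
  exact pow_le_pow_left₀ (norm_nonneg _) h1 2

lemma auxm_cont : Continuous auxm := by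
  have := Real.continuous_sinc
  unfold auxm
  fun_prop

lemma auxm_nonneg (x : ℝ) : 0 ≤ auxm x := sq_nonneg _

lemma auxm_integrable : Integrable auxm := by
  refine (integrable_inv_one_add_sq.const_mul 2).mono' auxm_cont.aestronglyMeasurable
    (Filter.Eventually.of_forall fun x => ?_)
  rw [Real.norm_eq_abs, abs_of_nonneg (auxm_nonneg x), ← div_eq_mul_inv, le_div_iff₀ (by positivity)]
  have h1 : auxm x ≤ 1 := by
    rw [auxm, sq_le_one_iff_abs_le_one]; exact Real.abs_sinc_le_one _
  have h2 : auxm x * (Real.pi / 2 * x) ^ 2 ≤ 1 := by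
    rw [auxm, ← mul_pow, sq_le_one_iff_abs_le_one]
    by_cases hx : Real.pi / 2 * x = 0
    · simp [hx]
    · rw [Real.sinc_of_ne_zero hx, div_mul_cancel₀ _ hx]
      exact Real.abs_sin_le_one _
  have h3 : x ^ 2 ≤ (Real.pi / 2 * x) ^ 2 := by
    rw [mul_pow]
    have : 1 ≤ (Real.pi / 2) ^ 2 := by nlinarith [Real.two_le_pi]
    nlinarith [sq_nonneg x]
  nlinarith [auxm_nonneg x]

lemma auxm_lower (x : ℝ) (hx : |x| ≤ 1) : 1 ≤ Real.pi ^ 2 / 4 * auxm x := by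
  have hpi := Real.pi_pos
  have h0 : 2 / Real.pi ≤ Real.sinc (Real.pi / 2 * |x|) := by
    by_cases h : x = 0
    · simp only [h, abs_zero, mul_zero, Real.sinc_zero]
      rw [div_le_one hpi]; exact Real.two_le_pi
    · have hp : 0 < Real.pi / 2 * |x| := by positivity
      rw [Real.sinc_of_ne_zero hp.ne', le_div_iff₀ hp]
      exact Real.mul_le_sin hp.le (by nlinarith)
  have h1 : auxm x = (Real.sinc (Real.pi / 2 * |x|)) ^ 2 := by
    rw [auxm]
    rcases abs_choice x with h | h <;> rw [h]
    rw [mul_neg, Real.sinc_neg]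
  have h2 : (2 / Real.pi) ^ 2 ≤ auxm x := by
    rw [h1]; exact pow_le_pow_left₀ (by positivity) h0 2
  calc (1 : ℝ) = Real.pi ^ 2 / 4 * (2 / Real.pi) ^ 2 := by field_simp; norm_num
    _ ≤ _ := mul_le_mul_of_nonneg_left h2 (by positivity)

/-- **Theorem (majorant in the Paley–Wiener space `PW¹_π`).** There is an absolute
constant `C` such that every entire function `f` of exponential type at most `π`,
real-valued on `ℝ` and integrable on `ℝ`, admits an entire majorant `g` of exponential
type at most `π`, integrable on `ℝ`, with `|f(t)| ≤ g(t)` for all `t ∈ ℝ` (in particular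
`g` is real-valued on `ℝ`) and `‖g‖_{L¹(ℝ)} ≤ C ‖f‖_{L¹(ℝ)}`. -/
theorem paley_wiener_majorant :
    ∃ C : ℝ, 0 < C ∧
      ∀ f : ℂ → ℂ, Differentiable ℂ f → ExpTypeLE Real.pi f →
        (∀ x : ℝ, ((f : ℂ → ℂ) x).im = 0) →
        Integrable (fun x : ℝ => f x) →
        ∃ g : ℂ → ℂ, Differentiable ℂ g ∧ ExpTypeLE Real.pi g ∧
          Integrable (fun x : ℝ => g x) ∧
          (∀ x : ℝ, (g x).im = 0 ∧ ‖f x‖ ≤ (g x).re) ∧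
          ∫ x : ℝ, ‖g x‖ ≤ C * ∫ x : ℝ, ‖f x‖ := by
  have hpi := Real.pi_pos
  have hm0 : 0 ≤ ∫ x, auxm x := integral_nonneg auxm_nonneg
  refine ⟨Real.pi ^ 2 / 4 * (1 + Real.exp (Real.pi + 1)) * (∫ x, auxm x) + 1, by positivity, ?_⟩
  intro f hf ht _ hi
  obtain ⟨hdi, hdn⟩ := aux_deriv f hf ht hi
  have hdf : Continuous (deriv f) := (hf.contDiff (n := 1)).continuous_deriv le_rfl
  have hfc := hf.continuous
  set h : ℝ → ℝ := fun s => ‖f s‖ + ‖deriv f s‖ with hh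
  have hhi : Integrable h := hi.norm.add hdi.norm
  have hh0 : ∀ s, 0 ≤ h s := fun s => by positivity
  have hhn : ∫ s, h s ≤ (1 + Real.exp (Real.pi + 1)) * ∫ x : ℝ, ‖f x‖ := by
    rw [hh, integral_add hi.norm hdi.norm]; linarith
  set w : ℝ → ℝ := fun s => Real.pi ^ 2 / 4 * h s with hw
  have hwi : Integrable w := hhi.const_mul _
  have hw0 : ∀ s, 0 ≤ w s := fun s => mul_nonneg (by positivity) (hh0 s)
  have hwc : Integrable fun s => (w s : ℂ) := hwi.ofReal
  obtain ⟨B, hB0, hB⟩ := auxM_bound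
  have hB' : ∀ (z : ℂ) (s : ℝ), ‖auxM (z + -(s : ℂ))‖ ≤ B * Real.exp (Real.pi * ‖z‖) := by
    intro z s
    refine (hB _).trans ?_
    have : |(z + -(s : ℂ)).im| ≤ ‖z‖ := by simpa using Complex.abs_im_le_norm z
    gcongr
  have hder := aux_param (fun s => (w s : ℂ)) hwc auxM auxM_diff (fun s => -(s : ℂ))
    (by fun_prop) (fun R => ⟨B * Real.exp (Real.pi * R), fun z s hz _ => (hB' z s).trans (by gcongr)⟩)
  set g : ℂ → ℂ := fun z => ∫ s, (w s : ℂ) * auxM (z + -(s : ℂ)) with hg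
  set G : ℝ → ℝ := convolution w auxm (ContinuousLinearMap.mul ℝ ℝ) volume with hG
  have hGx : ∀ x, G x = ∫ s, w s * auxm (x - s) := fun x => rfl
  have hgG : ∀ x : ℝ, g x = (G x : ℝ) := by
    intro x
    rw [hGx, ← integral_complex_ofReal]
    refine integral_congr_ae (Filter.Eventually.of_forall fun s => ?_)
    have : (x : ℂ) + -(s : ℂ) = ((x - s : ℝ) : ℂ) := by push_cast; ring
    simp only [this, auxM_real]
    push_cast; rfl
  have hGi : Integrable G := hwi.integrable_convolution _ auxm_integrable
  have hG0 : ∀ x, 0 ≤ G x := fun x => by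
    rw [hGx]; exact integral_nonneg fun s => mul_nonneg (hw0 s) (auxm_nonneg _)
  refine ⟨g, fun z => (hder z).differentiableAt, ?_, ?_, ?_, ?_⟩
  · intro ε hε
    refine ⟨(∫ s, ‖(w s : ℂ)‖) * B, fun z => ?_⟩
    rw [mul_assoc, ← integral_mul_const]
    refine norm_integral_le_of_norm_le (hwc.norm.mul_const _) (Filter.Eventually.of_forall fun s => ?_)
    rw [norm_mul]
    refine mul_le_mul_of_nonneg_left ((hB' z s).trans ?_) (norm_nonneg _)
    gcongr
    linarith
  · simp_rw [hgG]; exact hGi.ofReal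
  · intro x
    rw [hgG]
    refine ⟨Complex.ofReal_im _, ?_⟩
    rw [Complex.ofReal_re, hGx]
    have hint : Integrable fun s => w s * auxm (x - s) := by
      refine (hwi.norm.mul_const 1).mono' (hwi.aestronglyMeasurable.mul
        (auxm_cont.comp (by fun_prop)).aestronglyMeasurable) (Filter.Eventually.of_forall fun s => ?_)
      rw [norm_mul]
      refine mul_le_mul_of_nonneg_left ?_ (norm_nonneg _)
      rw [Real.norm_eq_abs, abs_of_nonneg (auxm_nonneg _), auxm, sq_le_one_iff_abs_le_one]
      exact Real.abs_sinc_le_one _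
    refine (aux_sobolev f hf x).trans ?_
    rw [intervalIntegral.integral_of_le (by linarith)]
    refine le_trans ?_ (setIntegral_le_integral (s := Set.Ioc x (x + 1)) hint
      (Filter.Eventually.of_forall fun s => mul_nonneg (hw0 s) (auxm_nonneg _)))
    refine setIntegral_mono_on hhi.integrableOn hint.integrableOn measurableSet_Ioc fun s hs => ?_
    have h1 := auxm_lower (x - s) (by rw [abs_le]; constructor <;> linarith [hs.1, hs.2])
    calc h s = h s * 1 := (mul_one _).symm
      _ ≤ h s * (Real.pi ^ 2 / 4 * auxm (x - s)) := mul_le_mul_of_nonneg_left h1 (hh0 s)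
      _ = w s * auxm (x - s) := by rw [hw]; ring
  · have h1 : ∫ x : ℝ, ‖g x‖ = (∫ s, w s) * ∫ x, auxm x := by
      have : ∀ x : ℝ, ‖g x‖ = G x := fun x => by
        rw [hgG, Complex.norm_real, Real.norm_eq_abs, abs_of_nonneg (hG0 x)]
      simp_rw [this]
      exact integral_convolution (ContinuousLinearMap.mul ℝ ℝ) hwi auxm_integrable
    have h2 : ∫ s, w s = Real.pi ^ 2 / 4 * ∫ s, h s := integral_const_mul _ _
    have h3 : 0 ≤ ∫ x : ℝ, ‖f x‖ := integral_nonneg fun _ => norm_nonneg _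
    rw [h1, h2]
    calc Real.pi ^ 2 / 4 * (∫ s, h s) * ∫ x, auxm x
        ≤ Real.pi ^ 2 / 4 * ((1 + Real.exp (Real.pi + 1)) * ∫ x : ℝ, ‖f x‖) * ∫ x, auxm x := by
          gcongr
      _ ≤ _ := by nlinarith
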